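/- arXiv:1209.3510 — 4 statements merged into one kernel-verified Lean document; each statement's English description precedes it below -/
import Mathlib

section
/- Let U ⊆ ℝ³ be open and let e_j : U → ℝ³ (j = 1,2,3) be a continuously differentiable frame, i.e. e₁(x), e₂(x), e₃(x) are linearly independent at every x ∈ U. Set σ^α := Σ_{j=1}^{3} e_j^α s^j, g^{αβ} := Σ_{j=1}^{3} e_j^α e_j^β, let g_{αβ} be the inverse matrix of g^{αβ}, set σ_β := Σ_α g_{βα} σ^α, let the coframe e^k be defined by Σ_α e_j^α e^k_α = δ_j^k, and let Γ(β;αγ) := (1/2) Σ_δ g^{βδ} (∂g_{γδ}/∂x^α + ∂g_{αδ}/∂x^γ − ∂g_{αγ}/∂x^δ) be the Christoffel symbols. Define A₀(x) := −(i/4) Σ_{α,β} σ^α σ_β (∂σ^β/∂x^α + Σ_γ Γ(β;αγ) σ^γ) + (i/2) Σ_{α,β} σ^α Γ(β;αβ), and the subprincipal symbol A_sub(x) := A₀(x) + (i/2) Σ_α ∂σ^α/∂x^α. Let c(x) := sign of the determinant of the 3×3 matrix whose j-th row is e_j(x), and define *T^ax(x) := (1/3) Σ_{k,l} δ_{kl}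 √(det g^{αβ}) [ e^k_1 ∂e^l_3/∂x^2 + e^k_2 ∂e^l_1/∂x^3 + e^k_3 ∂e^l_2/∂x^1 − e^k_1 ∂e^l_2/∂x^3 − e^k_2 ∂e^l_3/∂x^1 − e^k_3 ∂e^l_1/∂x^2 ]. Then at every x ∈ U: A_sub(x) = (3 c(x)/4) · *T^ax(x) · I, where I is the 2×2 identity matrix. -/
open Complex Matrix BigOperators

noncomputable section

/-- The Pauli matrices s¹, s², s³. -/
def pauli : Fin 3 → Matrix (Fin 2) (Fin 2) ℂ :=
  ![!![0, 1; 1, 0], !![0, -Complex.I; Complex.I, 0], !![1, 0; 0, -1]]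

/-- The contravariant metric g^{αβ} = Σ_j e_j^α e_j^β generated by a frame e. -/
def gM (e : (Fin 3 → ℝ) → Fin 3 → Fin 3 → ℝ) (x : Fin 3 → ℝ) : Matrix (Fin 3) (Fin 3) ℝ :=
  Matrix.of fun α β => ∑ j, e x j α * e x j β

/-- The covariant metric g_{αβ}, inverse matrix of g^{αβ}. -/
def glM (e : (Fin 3 → ℝ) → Fin 3 → Fin 3 → ℝ) (x : Fin 3 → ℝ) : Matrix (Fin 3) (Fin 3) ℝ :=
  (gM e x)⁻¹

/-- The Pauli matrices σ^α = Σ_j e_j^α s^j of the frame. -/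
def sigma' (e : (Fin 3 → ℝ) → Fin 3 → Fin 3 → ℝ) (x : Fin 3 → ℝ) (α : Fin 3) :
    Matrix (Fin 2) (Fin 2) ℂ :=
  ∑ j, ((e x j α : ℝ) : ℂ) • pauli j

/-- σ_β = Σ_α g_{βα} σ^α. -/
def sigmaLow (e : (Fin 3 → ℝ) → Fin 3 → Fin 3 → ℝ) (x : Fin 3 → ℝ) (β : Fin 3) :
    Matrix (Fin 2) (Fin 2) ℂ :=
  ∑ α, ((glM e x β α : ℝ) : ℂ) • sigma' e x α

/-- The Christoffel symbols Γ(β;αγ) of the metric. -/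
def christoffel (e : (Fin 3 → ℝ) → Fin 3 → Fin 3 → ℝ) (x : Fin 3 → ℝ) (β α γ : Fin 3) : ℝ :=
  (1 / 2) * ∑ δ, gM e x β δ *
    (fderiv ℝ (fun y => glM e y γ δ) x (Pi.single α 1)
      + fderiv ℝ (fun y => glM e y α δ) x (Pi.single γ 1)
      - fderiv ℝ (fun y => glM e y α γ) x (Pi.single δ 1))

/-- ∂σ^β/∂x^α (entrywise). -/
def Dsigma (e : (Fin 3 → ℝ) → Fin 3 → Fin 3 → ℝ) (x : Fin 3 → ℝ) (α β : Fin 3) :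
    Matrix (Fin 2) (Fin 2) ℂ :=
  Matrix.of fun i j => fderiv ℝ (fun y => sigma' e y β i j) x (Pi.single α 1)

/-- The zero-order part A₀ of the massless Dirac operator on half-densities. -/
def A0 (e : (Fin 3 → ℝ) → Fin 3 → Fin 3 → ℝ) (x : Fin 3 → ℝ) : Matrix (Fin 2) (Fin 2) ℂ :=
  (-(Complex.I / 4)) • (∑ α, ∑ β, sigma' e x α * sigmaLow e x β *
      (Dsigma e x α β + ∑ γ, ((christoffel e x β α γ : ℝ) : ℂ) • sigma' e x γ))
    + (Complex.I / 2) • (∑ α, ∑ β, ((christoffel e x β α β : ℝ) : ℂ) • sigma' e x α)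

/-- The subprincipal symbol A_sub = A₀ + (i/2) Σ_α ∂σ^α/∂x^α. -/
def Asub (e : (Fin 3 → ℝ) → Fin 3 → Fin 3 → ℝ) (x : Fin 3 → ℝ) : Matrix (Fin 2) (Fin 2) ℂ :=
  A0 e x + (Complex.I / 2) • ∑ α, Dsigma e x α α

/-- The topological charge c(x) = sgn det(e_j^α(x)). -/
def charge (e : (Fin 3 → ℝ) → Fin 3 → Fin 3 → ℝ) (x : Fin 3 → ℝ) : ℝ :=
  Real.sign (Matrix.of (e x) : Matrix (Fin 3) (Fin 3) ℝ).det

/-- The Hodge dual *T^ax of the axial torsion, expressed via the coframe f. -/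
def starTax (e : (Fin 3 → ℝ) → Fin 3 → Fin 3 → ℝ)
    (f : (Fin 3 → ℝ) → Fin 3 → Fin 3 → ℝ) (x : Fin 3 → ℝ) : ℝ :=
  (1 / 3) * ∑ k, ∑ l, (if k = l then (1 : ℝ) else 0) * Real.sqrt ((gM e x).det) *
    (f x k 0 * fderiv ℝ (fun y => f y l 2) x (Pi.single 1 1)
      + f x k 1 * fderiv ℝ (fun y => f y l 0) x (Pi.single 2 1)
      + f x k 2 * fderiv ℝ (fun y => f y l 1) x (Pi.single 0 1)
      - f x k 0 * fderiv ℝ (fun y => f y l 1) x (Pi.single 2 1)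
      - f x k 1 * fderiv ℝ (fun y => f y l 2) x (Pi.single 0 1)
      - f x k 2 * fderiv ℝ (fun y => f y l 0) x (Pi.single 1 1))

/-
Let `ω^k_{ij} = e^k(∇_{e_i} e_j)` be the Levi-Civita connection coefficients in the orthonormal
frame. Expanding everything in the frame,
`A_sub = -(i/4) ∑ ω^k_{ij} s^i s^k s^j + (i/2) ∑ ω^i_{ij} s^j`.
Metric compatibility makes `ω` antisymmetric in `k, j`, so the Clifford relations reduce the first
term to the negative of the second plus a scalar, and `A_sub = -(1/4) (∑ ε_{kij} ω^k_{ij}) I`.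
Torsion-freeness gives `∑ ε_{kij} ω^k_{ij} = -∑ ε_{kij} e_i^α e_j^β ∂_α e^k_β`. The last sum is
`det e` times the coordinate expression in `*T^ax`, and `det e = c √(det g^{αβ})`.
-/

section DualFrame

variable {ι R : Type*} [Fintype ι] [DecidableEq ι] [CommRing R]

/-- The covectors `F k` form the coframe dual to the frame of vectors `E j`; both are given by
their components, listed in rows. -/
def IsDualFrame (E F : ι → ι → R) : Prop :=
  ∀ j k, ∑ α, E j α * F k α = if j = k then 1 else 0

variable {E F : ι → ι → R}

lemma isDualFrame_iff_mul_transpose : IsDualFrame E F ↔ of E * (of F)ᵀ = 1 := by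
  simp only [IsDualFrame, ← Matrix.ext_iff, mul_apply, transpose_apply, of_apply, one_apply]

namespace IsDualFrame

lemma transpose_mul (h : IsDualFrame E F) : (of F)ᵀ * of E = 1 :=
  mul_eq_one_comm.mp (isDualFrame_iff_mul_transpose.mp h)

lemma symm (h : IsDualFrame E F) : IsDualFrame F E := fun j k => by
  simpa only [mul_comm, eq_comm] using h k j

lemma det_mul_det (h : IsDualFrame E F) : (of E).det * (of F).det = 1 := by
  rw [← det_transpose (of F), ← det_mul, isDualFrame_iff_mul_transpose.mp h, det_one]

lemma sum_mul_sum_mul (h : IsDualFrame E F) (X : ι → R) (j : ι) :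
    ∑ α, E j α * ∑ k, F k α * X k = X j := by
  have hX := congrFun (congrArg (· *ᵥ X) (isDualFrame_iff_mul_transpose.mp h)) j
  rw [← mulVec_mulVec, one_mulVec] at hX
  exact hX

lemma trace_eq (h : IsDualFrame E F) (T : ι → ι → R) :
    ∑ α, T α α = ∑ i, ∑ α, ∑ β, E i α * F i β * T α β := by
  have hT : (of T).trace = (of E * of T * (of F)ᵀ).trace := by
    rw [Matrix.mul_assoc, trace_mul_comm, Matrix.mul_assoc, h.transpose_mul, Matrix.mul_one]
  simp only [trace, diag_apply, mul_apply, of_apply, transpose_apply, Finset.sum_mul] at hT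
  rw [hT]
  refine Finset.sum_congr rfl fun i _ => ?_
  rw [Finset.sum_comm]
  simp only [mul_right_comm]

end IsDualFrame

end DualFrame

section CoframeDerivative

variable {ι 𝕜 X : Type*} [Fintype ι] [DecidableEq ι] [NontriviallyNormedField 𝕜]
  [NormedAddCommGroup X] [NormedSpace 𝕜 X] {x : X}

lemma fderiv_eq_sum_mul_single (u : (ι → 𝕜) → 𝕜) (x v : ι → 𝕜) :
    fderiv 𝕜 u x v = ∑ α, v α * fderiv 𝕜 u x (Pi.single α 1) := by
  conv_lhs => rw [← LinearMap.sum_single_apply (fun _ => 𝕜) v]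
  rw [map_sum]
  refine Finset.sum_congr rfl fun α _ => ?_
  rw [← smul_eq_mul, ← map_smul, ← Pi.single_smul, smul_eq_mul, mul_one]

lemma differentiableAt_det {A : X → Matrix ι ι 𝕜}
    (hA : ∀ i j, DifferentiableAt 𝕜 (fun y => A y i j) x) :
    DifferentiableAt 𝕜 (fun y => (A y).det) x := by
  simp only [det_apply]
  exact .fun_sum fun p _ =>
    (HasFDerivAt.finsetProd fun i _ => (hA (p i) i).hasFDerivAt).differentiableAt.const_smul _

lemma differentiableAt_adjugate {A : X → Matrix ι ι 𝕜}
    (hA : ∀ i j, DifferentiableAt 𝕜 (fun y => A y i j) x) (i j : ι) :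
    DifferentiableAt 𝕜 (fun y => (A y).adjugate i j) x := by
  simp only [adjugate_apply]
  refine differentiableAt_det fun k l => ?_
  by_cases hk : k = j
  · simp only [hk, updateRow_self, differentiableAt_const]
  · simpa only [updateRow_ne hk] using hA k l

variable {e f : X → ι → ι → 𝕜}

lemma differentiableAt_coframe (he : ∀ j α, DifferentiableAt 𝕜 (fun y => e y j α) x)
    (hf : ∀ᶠ y in nhds x, IsDualFrame (e y) (f y)) (k α : ι) :
    DifferentiableAt 𝕜 (fun y => f y k α) x := by
  have hdet : (of (e x)).det ≠ 0 := left_ne_zero_of_mul_eq_one hf.self_of_nhds.det_mul_det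
  have cramer : (fun y => f y k α) =ᶠ[nhds x]
      fun y => (of (e y)).det⁻¹ * (of (e y)).adjugate α k := by
    filter_upwards [hf] with y hy
    have hinv : (of (f y))ᵀ = (of (e y))⁻¹ :=
      (inv_eq_right_inv (isDualFrame_iff_mul_transpose.mp hy)).symm
    have hentry : f y k α = (of (e y))⁻¹ α k := congrFun (congrFun hinv α) k
    rw [hentry, Matrix.inv_def, Ring.inverse_eq_inv', Matrix.smul_apply, smul_eq_mul]
  exact (((differentiableAt_det he).inv hdet).mul
    (differentiableAt_adjugate he α k)).congr_of_eventuallyEq cramer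

lemma sum_fderiv_frame_mul_coframe (he : ∀ j α, DifferentiableAt 𝕜 (fun y => e y j α) x)
    (hf : ∀ᶠ y in nhds x, IsDualFrame (e y) (f y)) (j k : ι) (v : X) :
    ∑ β, f x k β * fderiv 𝕜 (fun y => e y j β) x v
      = -∑ β, e x j β * fderiv 𝕜 (fun y => f y k β) x v := by
  have hfd := differentiableAt_coframe he hf
  have hconst : (fun y => ∑ β, e y j β * f y k β) =ᶠ[nhds x] fun _ => if j = k then 1 else 0 :=
    hf.mono fun y hy => hy j k
  have hzero := DFunLike.congr_fun (hconst.fderiv_eq (𝕜 := 𝕜)) v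
  rw [fderiv_fun_sum fun β _ => (he j β).fun_mul (hfd k β), fderiv_fun_const] at hzero
  simp only [fderiv_fun_mul (he j _) (hfd k _), _root_.sum_apply, _root_.add_apply,
    _root_.smul_apply, smul_eq_mul, Finset.sum_add_distrib, Pi.zero_apply,
    _root_.zero_apply] at hzero
  exact eq_neg_of_add_eq_zero_right hzero

end CoframeDerivative

section LeviCivitaSymbol

/-- The contraction `∑ ε_{abc} T_{abc}` of a rank-three array with the Levi-Civita symbol. -/
def leviCivitaSum {R : Type*} [AddCommGroup R] (T : Fin 3 → Fin 3 → Fin 3 → R) : R :=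
  T 0 1 2 + T 1 2 0 + T 2 0 1 - T 0 2 1 - T 1 0 2 - T 2 1 0

lemma leviCivitaSum_pullback {R : Type*} [CommRing R] (E : Fin 3 → Fin 3 → R)
    (T : Fin 3 → Fin 3 → Fin 3 → R) :
    leviCivitaSum (fun a b c => ∑ α, E a α * ∑ β, E b β * ∑ γ, E c γ * T α β γ)
      = (of E).det * leviCivitaSum T := by
  simp only [leviCivitaSum, det_fin_three, of_apply, Fin.sum_univ_three]
  ring

lemma leviCivitaSum_eq_neg_of_torsionFree {R : Type*} [AddCommGroup R]
    {S T : Fin 3 → Fin 3 → Fin 3 → R} (h : ∀ a b c, S a b c + T a b c = S a c b + T a c b) :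
    leviCivitaSum S = -leviCivitaSum T := by
  have h012 := h 0 1 2
  have h120 := h 1 2 0
  have h201 := h 2 0 1
  rw [← eq_sub_iff_add_eq] at h012 h120 h201
  rw [leviCivitaSum, leviCivitaSum, h012, h120, h201]
  abel

end LeviCivitaSymbol

section Pauli

lemma pauli_mul_self (j : Fin 3) : pauli j * pauli j = 1 := by
  fin_cases j <;> ext a b <;> fin_cases a <;> fin_cases b <;> simp [pauli]

lemma pauli_mul_succ (j : Fin 3) : pauli j * pauli (j + 1) = I • pauli (j + 2) := by
  fin_cases j <;> ext a b <;> fin_cases a <;> fin_cases b <;> simp [pauli]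

lemma pauli_succ_mul (j : Fin 3) : pauli (j + 1) * pauli j = -(I • pauli (j + 2)) := by
  fin_cases j <;> ext a b <;> fin_cases a <;> fin_cases b <;> simp [pauli]

lemma sum_smul_pauli_triple_of_antisymm {ω : Fin 3 → Fin 3 → Fin 3 → ℂ}
    (hω : ∀ k i j, ω k i j = -ω j i k) :
    ∑ i, ∑ k, ∑ j, ω k i j • (pauli i * pauli k * pauli j)
      = (2 : ℂ) • ∑ j, (∑ i, ω i i j) • pauli j - (I * leviCivitaSum ω) • 1 := by
  have h01 : pauli 0 * pauli 1 = I • pauli 2 := pauli_mul_succ 0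
  have h12 : pauli 1 * pauli 2 = I • pauli 0 := pauli_mul_succ 1
  have h20 : pauli 2 * pauli 0 = I • pauli 1 := pauli_mul_succ 2
  have h10 : pauli 1 * pauli 0 = -(I • pauli 2) := pauli_succ_mul 0
  have h21 : pauli 2 * pauli 1 = -(I • pauli 0) := pauli_succ_mul 1
  have h02 : pauli 0 * pauli 2 = -(I • pauli 1) := pauli_succ_mul 2
  have hdiag : ∀ k i, ω k i k = 0 := fun k i => self_eq_neg.mp (hω k i k)
  simp only [Fin.sum_univ_three, leviCivitaSum, mul_assoc, pauli_mul_self, h01, h12, h20, h10,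
    h21, h02, hdiag, hω 1 _ 0, hω 2 _ 0, hω 2 _ 1, mul_neg, mul_smul_comm, mul_one, smul_smul,
    smul_neg, I_mul_I]
  module

end Pauli

section Frame

variable {e f : (Fin 3 → ℝ) → Fin 3 → Fin 3 → ℝ} {x : Fin 3 → ℝ}

lemma gM_eq_transpose_mul : gM e x = (of (e x))ᵀ * of (e x) := rfl

lemma sqrt_det_gM : Real.sqrt (gM e x).det = |(of (e x)).det| := by
  rw [gM_eq_transpose_mul, det_mul, det_transpose, Real.sqrt_mul_self_eq_abs]

lemma charge_mul_sqrt_det_gM : charge e x * Real.sqrt (gM e x).det = (of (e x)).det := by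
  rw [sqrt_det_gM, charge]
  rcases lt_trichotomy (of (e x)).det 0 with h | h | h
  · rw [Real.sign_of_neg h, abs_of_neg h, neg_one_mul, neg_neg]
  · rw [h, abs_zero, mul_zero]
  · rw [Real.sign_of_pos h, abs_of_pos h, one_mul]

lemma isSymm_glM (e : (Fin 3 → ℝ) → Fin 3 → Fin 3 → ℝ) (x : Fin 3 → ℝ) : (glM e x).IsSymm := by
  rw [glM, gM_eq_transpose_mul]
  exact (isSymm_transpose_mul_self _).inv

lemma glM_eq_transpose_mul (h : IsDualFrame (e x) (f x)) :
    glM e x = (of (f x))ᵀ * of (f x) := by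
  refine inv_eq_right_inv ?_
  calc gM e x * ((of (f x))ᵀ * of (f x))
      = (of (e x))ᵀ * (of (e x) * (of (f x))ᵀ) * of (f x) := by
        simp only [gM_eq_transpose_mul, Matrix.mul_assoc]
    _ = 1 := by rw [isDualFrame_iff_mul_transpose.mp h, Matrix.mul_one, h.symm.transpose_mul]

lemma glM_apply (h : IsDualFrame (e x) (f x)) (β γ : Fin 3) :
    glM e x β γ = ∑ l, f x l β * f x l γ := by
  rw [glM_eq_transpose_mul h]
  rfl

lemma sum_coframe_mul_gM (h : IsDualFrame (e x) (f x)) (k δ : Fin 3) :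
    ∑ β, f x k β * gM e x β δ = e x k δ :=
  h.symm.sum_mul_sum_mul (fun j => e x j δ) k

lemma sum_glM_mul_frame (h : IsDualFrame (e x) (f x)) (j β : Fin 3) :
    ∑ α, glM e x β α * e x j α = f x j β := by
  simpa only [glM_apply h, mul_comm] using h.sum_mul_sum_mul (fun l => f x l β) j

lemma fderiv_glM (he : ∀ j α, DifferentiableAt ℝ (fun y => e y j α) x)
    (hf : ∀ᶠ y in nhds x, IsDualFrame (e y) (f y)) (β γ : Fin 3) (v : Fin 3 → ℝ) :
    fderiv ℝ (fun y => glM e y β γ) x v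
      = ∑ l, f x l β * fderiv ℝ (fun y => f y l γ) x v
        + ∑ l, f x l γ * fderiv ℝ (fun y => f y l β) x v := by
  have hfd := differentiableAt_coframe he hf
  have hmetric : (fun y => glM e y β γ) =ᶠ[nhds x] fun y => ∑ l, f y l β * f y l γ :=
    hf.mono fun y hy => glM_apply hy β γ
  rw [hmetric.fderiv_eq, fderiv_fun_sum fun l _ => (hfd l β).fun_mul (hfd l γ)]
  simp only [fderiv_fun_mul (hfd _ β) (hfd _ γ), _root_.sum_apply, _root_.add_apply,
    _root_.smul_apply, smul_eq_mul, Finset.sum_add_distrib]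

/-- The frame component `(∂g)(e_i; e_j, e_k) = e_i^α e_j^β e_k^γ ∂_α g_{βγ}` of the derivative of
the covariant metric. -/
def metricDeriv (e : (Fin 3 → ℝ) → Fin 3 → Fin 3 → ℝ) (x : Fin 3 → ℝ) (i j k : Fin 3) : ℝ :=
  ∑ β, e x j β * ∑ γ, e x k γ * fderiv ℝ (fun y => glM e y β γ) x (e x i)

/-- The frame component `e_i^α e_j^β ∂_α e^k_β` of the derivative of the coframe `f`; its part
antisymmetric in `i, j` is the torsion of the teleparallel connection. -/
def coframeDeriv (e f : (Fin 3 → ℝ) → Fin 3 → Fin 3 → ℝ) (x : Fin 3 → ℝ) (k i j : Fin 3) : ℝ :=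
  ∑ β, e x j β * fderiv ℝ (fun y => f y k β) x (e x i)

/-- The component `(∇_α e_j)^β` of the Levi-Civita covariant derivative of the frame. -/
def covDeriv (e : (Fin 3 → ℝ) → Fin 3 → Fin 3 → ℝ) (x : Fin 3 → ℝ) (j α β : Fin 3) : ℝ :=
  fderiv ℝ (fun y => e y j β) x (Pi.single α 1) + ∑ γ, christoffel e x β α γ * e x j γ

/-- The connection coefficient `ω^k_{ij} = e^k(∇_{e_i} e_j)` of the Levi-Civita connection in the
orthonormal frame `e` with coframe `f`. -/
def connectionCoeff (e f : (Fin 3 → ℝ) → Fin 3 → Fin 3 → ℝ) (x : Fin 3 → ℝ) (k i j : Fin 3) : ℝ :=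
  ∑ α, ∑ β, e x i α * f x k β * covDeriv e x j α β

lemma metricDeriv_eq (he : ∀ j α, DifferentiableAt ℝ (fun y => e y j α) x)
    (hf : ∀ᶠ y in nhds x, IsDualFrame (e y) (f y)) (i j k : Fin 3) :
    metricDeriv e x i j k = coframeDeriv e f x j i k + coframeDeriv e f x k i j := by
  have h := hf.self_of_nhds
  let d : Fin 3 → Fin 3 → ℝ := fun l γ => fderiv ℝ (fun y => f y l γ) x (e x i)
  have hjk : ∑ β, e x j β * ∑ γ, e x k γ * ∑ l, f x l β * d l γ = ∑ γ, e x k γ * d j γ := by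
    simp only [← h.sum_mul_sum_mul (fun l => ∑ γ, e x k γ * d l γ) j, Finset.mul_sum]
    refine Finset.sum_congr rfl fun β _ => ?_
    rw [Finset.sum_comm]
    simp only [mul_left_comm]
  have hkj : ∑ β, e x j β * ∑ γ, e x k γ * ∑ l, f x l γ * d l β = ∑ β, e x j β * d k β := by
    simp only [h.sum_mul_sum_mul]
  simp only [metricDeriv, fderiv_glM he hf, mul_add, Finset.sum_add_distrib]
  exact congrArg₂ (· + ·) hjk hkj

lemma christoffel_symm (e : (Fin 3 → ℝ) → Fin 3 → Fin 3 → ℝ) (x : Fin 3 → ℝ) (β α γ : Fin 3) :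
    christoffel e x β α γ = christoffel e x β γ α := by
  have hswap : (fun y => glM e y α γ) = fun y => glM e y γ α :=
    funext fun y => (isSymm_glM e y).apply γ α
  simp only [christoffel, hswap, add_comm]

lemma sum_coframe_mul_christoffel (h : IsDualFrame (e x) (f x)) (k α γ : Fin 3) :
    ∑ β, f x k β * christoffel e x β α γ
      = (1 / 2) * ∑ δ, e x k δ * (fderiv ℝ (fun y => glM e y γ δ) x (Pi.single α 1)
        + fderiv ℝ (fun y => glM e y α δ) x (Pi.single γ 1)
        - fderiv ℝ (fun y => glM e y α γ) x (Pi.single δ 1)) := by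
  simp only [christoffel, ← sum_coframe_mul_gM h k, Finset.sum_mul, Finset.mul_sum]
  rw [Finset.sum_comm]
  simp only [mul_left_comm, mul_assoc]

lemma christoffel_frame (h : IsDualFrame (e x) (f x)) (k i j : Fin 3) :
    ∑ α, e x i α * ∑ γ, e x j γ * ∑ β, f x k β * christoffel e x β α γ
      = (1 / 2) * (metricDeriv e x i j k + metricDeriv e x j i k - metricDeriv e x k i j) := by
  simp only [sum_coframe_mul_christoffel h, metricDeriv, fderiv_eq_sum_mul_single _ x (e x _)]
  simp only [Fin.sum_univ_three]
  ring

lemma connectionCoeff_eq (he : ∀ j α, DifferentiableAt ℝ (fun y => e y j α) x)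
    (hf : ∀ᶠ y in nhds x, IsDualFrame (e y) (f y)) (k i j : Fin 3) :
    connectionCoeff e f x k i j = (1 / 2) *
      (metricDeriv e x i j k + metricDeriv e x j i k - metricDeriv e x k i j)
        - coframeDeriv e f x k i j := by
  have hpartial : ∑ α, ∑ β, e x i α * f x k β * fderiv ℝ (fun y => e y j β) x (Pi.single α 1)
      = -coframeDeriv e f x k i j := by
    rw [coframeDeriv, ← sum_fderiv_frame_mul_coframe he hf, Finset.sum_comm]
    simp only [fderiv_eq_sum_mul_single _ x (e x i), Finset.mul_sum, mul_left_comm, mul_assoc]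
  have hchristoffel : ∑ α, ∑ β, e x i α * f x k β * ∑ γ, christoffel e x β α γ * e x j γ
      = ∑ α, e x i α * ∑ γ, e x j γ * ∑ β, f x k β * christoffel e x β α γ := by
    refine Finset.sum_congr rfl fun α _ => ?_
    simp only [Finset.mul_sum]
    rw [Finset.sum_comm]
    refine Finset.sum_congr rfl fun γ _ => Finset.sum_congr rfl fun β _ => ?_
    ring
  simp only [connectionCoeff, covDeriv, mul_add, Finset.sum_add_distrib, hpartial, hchristoffel,
    christoffel_frame hf.self_of_nhds]
  ring

lemma connectionCoeff_antisymm (he : ∀ j α, DifferentiableAt ℝ (fun y => e y j α) x)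
    (hf : ∀ᶠ y in nhds x, IsDualFrame (e y) (f y)) (k i j : Fin 3) :
    connectionCoeff e f x k i j = -connectionCoeff e f x j i k := by
  simp only [connectionCoeff_eq he hf, metricDeriv_eq he hf]
  ring

lemma connectionCoeff_torsionFree (he : ∀ j α, DifferentiableAt ℝ (fun y => e y j α) x)
    (hf : ∀ᶠ y in nhds x, IsDualFrame (e y) (f y)) (k i j : Fin 3) :
    connectionCoeff e f x k i j + coframeDeriv e f x k i j
      = connectionCoeff e f x k j i + coframeDeriv e f x k j i := by
  simp only [connectionCoeff_eq he hf, metricDeriv_eq he hf]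
  ring

lemma leviCivitaSum_coframeDeriv (h : IsDualFrame (e x) (f x)) :
    leviCivitaSum (coframeDeriv e f x) = (of (e x)).det * leviCivitaSum
      fun α β γ => ∑ l, f x l α * fderiv ℝ (fun y => f y l γ) x (Pi.single β 1) := by
  rw [← leviCivitaSum_pullback]
  congr 1
  funext k i j
  have hcontract : ∀ α, ∑ β, e x i β * ∑ γ, e x j γ *
      ∑ l, f x l α * fderiv ℝ (fun y => f y l γ) x (Pi.single β 1)
        = ∑ l, f x l α * coframeDeriv e f x l i j := fun α => by
    simp only [coframeDeriv, fderiv_eq_sum_mul_single _ x (e x i)]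
    simp only [Fin.sum_univ_three]
    ring
  simp only [hcontract, h.sum_mul_sum_mul]

lemma charge_mul_starTax (h : IsDualFrame (e x) (f x)) :
    charge e x * starTax e f x = (1 / 3) * leviCivitaSum (coframeDeriv e f x) := by
  rw [leviCivitaSum_coframeDeriv h, ← charge_mul_sqrt_det_gM]
  simp only [starTax, leviCivitaSum, ite_mul, one_mul, zero_mul, Finset.sum_ite_eq,
    Finset.mem_univ, if_true, ← Finset.mul_sum, Finset.sum_add_distrib, Finset.sum_sub_distrib]
  ring

end Frame

section Dirac

lemma sum_sum_smul_mul_smul_mul_smul {ι κ R A : Type*} [Fintype ι] [Fintype κ] [CommSemiring R]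
    [Semiring A] [Algebra R A] (s : κ → A) (a b : κ → ι → R) (c : κ → ι → ι → R) :
    ∑ α, ∑ β, (∑ i, a i α • s i) * (∑ k, b k β • s k) * (∑ j, c j α β • s j)
      = ∑ i, ∑ k, ∑ j, (∑ α, ∑ β, a i α * b k β * c j α β) • (s i * s k * s j) := by
  calc _ = ∑ α, ∑ β, ∑ i, ∑ k, ∑ j, (a i α * b k β * c j α β) • (s i * s k * s j) := by
        simp only [mul_assoc, Finset.sum_mul]
        simp only [Finset.mul_sum, smul_mul_smul_comm]
    _ = ∑ i, ∑ k, ∑ j, ∑ α, ∑ β, (a i α * b k β * c j α β) • (s i * s k * s j) := by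
        simpa only [Fintype.sum_prod_type] using
          Finset.sum_comm (s := (.univ : Finset (ι × ι))) (t := (.univ : Finset (κ × κ × κ)))
            (f := fun p q => (a q.1 p.1 * b q.2.1 p.2 * c q.2.2 p.1 p.2) •
              (s q.1 * s q.2.1 * s q.2.2))
    _ = _ := by simp only [Finset.sum_smul]

variable {e f : (Fin 3 → ℝ) → Fin 3 → Fin 3 → ℝ} {x : Fin 3 → ℝ}

lemma sigmaLow_eq (h : IsDualFrame (e x) (f x)) (β : Fin 3) :
    sigmaLow e x β = ∑ k, ((f x k β : ℝ) : ℂ) • pauli k := by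
  simp only [sigmaLow, sigma', Finset.smul_sum, smul_smul, ← sum_glM_mul_frame h, ofReal_sum,
    ofReal_mul, Finset.sum_smul]
  exact Finset.sum_comm

lemma Dsigma_eq (he : ∀ j α, DifferentiableAt ℝ (fun y => e y j α) x) (α β : Fin 3) :
    Dsigma e x α β
      = ∑ j, ((fderiv ℝ (fun y => e y j β) x (Pi.single α 1) : ℝ) : ℂ) • pauli j := by
  ext a b
  have hderiv : ∀ j, HasFDerivAt (fun y => ((e y j β : ℝ) : ℂ) * pauli j a b)
      (pauli j a b • ofRealCLM.comp (fderiv ℝ (fun y => e y j β) x)) x := fun j =>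
    (ofRealCLM.hasFDerivAt.comp x (he j β).hasFDerivAt).mul_const (pauli j a b)
  simp only [Dsigma, sigma', of_apply, Matrix.sum_apply, Matrix.smul_apply, smul_eq_mul]
  rw [(HasFDerivAt.fun_sum fun j _ => hderiv j).fderiv]
  simp [mul_comm]

lemma Dsigma_add_christoffel (he : ∀ j α, DifferentiableAt ℝ (fun y => e y j α) x)
    (α β : Fin 3) :
    Dsigma e x α β + ∑ γ, ((christoffel e x β α γ : ℝ) : ℂ) • sigma' e x γ
      = ∑ j, ((covDeriv e x j α β : ℝ) : ℂ) • pauli j := by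
  simp only [Dsigma_eq he, covDeriv, sigma', ofReal_add, ofReal_sum, ofReal_mul, add_smul,
    Finset.sum_add_distrib, Finset.sum_smul, Finset.smul_sum, smul_smul]
  rw [Finset.sum_comm]

lemma sum_sigma_mul_sigmaLow_mul_nabla (he : ∀ j α, DifferentiableAt ℝ (fun y => e y j α) x)
    (h : IsDualFrame (e x) (f x)) :
    ∑ α, ∑ β, sigma' e x α * sigmaLow e x β *
        (Dsigma e x α β + ∑ γ, ((christoffel e x β α γ : ℝ) : ℂ) • sigma' e x γ)
      = ∑ i, ∑ k, ∑ j,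
        ((connectionCoeff e f x k i j : ℝ) : ℂ) • (pauli i * pauli k * pauli j) := by
  simp only [Dsigma_add_christoffel he, sigmaLow_eq h]
  simp only [sigma', sum_sum_smul_mul_smul_mul_smul, connectionCoeff, ofReal_sum, ofReal_mul]

lemma sum_christoffel_smul_sigma_add_sum_Dsigma
    (he : ∀ j α, DifferentiableAt ℝ (fun y => e y j α) x) (h : IsDualFrame (e x) (f x)) :
    ∑ α, ∑ β, ((christoffel e x β α β : ℝ) : ℂ) • sigma' e x α + ∑ α, Dsigma e x α α
      = ∑ j, (∑ i, ((connectionCoeff e f x i i j : ℝ) : ℂ)) • pauli j := by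
  have hdiv : ∀ j, ∑ i, ((connectionCoeff e f x i i j : ℝ) : ℂ)
      = ∑ α, ((covDeriv e x j α α : ℝ) : ℂ) := fun j => by
    simp only [← ofReal_sum, h.trace_eq, connectionCoeff]
  calc _ = ∑ α, (Dsigma e x α α + ∑ γ, ((christoffel e x α α γ : ℝ) : ℂ) • sigma' e x γ) := by
        rw [add_comm, Finset.sum_add_distrib, Finset.sum_comm]
        simp only [christoffel_symm e x _ _ _]
    _ = _ := by
        simp only [Dsigma_add_christoffel he, hdiv, Finset.sum_smul]
        exact Finset.sum_comm

lemma Asub_eq_leviCivitaSum_connectionCoeff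
    (he : ∀ j α, DifferentiableAt ℝ (fun y => e y j α) x)
    (hf : ∀ᶠ y in nhds x, IsDualFrame (e y) (f y)) :
    Asub e x = ((-(1 / 4) * leviCivitaSum (connectionCoeff e f x) : ℝ) : ℂ) • 1 := by
  have h := hf.self_of_nhds
  set ω := connectionCoeff e f x with hω
  have hantisymm : ∀ k i j, (ω k i j : ℂ) = -(ω j i k : ℂ) := fun k i j => by
    rw [hω, connectionCoeff_antisymm he hf, ofReal_neg]
  have hcast : ((leviCivitaSum ω : ℝ) : ℂ) = leviCivitaSum fun k i j => (ω k i j : ℂ) := by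
    simp only [leviCivitaSum, ofReal_add, ofReal_sub]
  rw [Asub, A0, add_assoc, ← smul_add, sum_sigma_mul_sigmaLow_mul_nabla he h,
    sum_christoffel_smul_sigma_add_sum_Dsigma he h, sum_smul_pauli_triple_of_antisymm hantisymm,
    ofReal_mul, hcast]
  push_cast
  match_scalars
  · ring
  · linear_combination (1 / 4) * (leviCivitaSum fun k i j => (ω k i j : ℂ)) * I_mul_I

theorem subprincipal_symbol_of_massless_dirac_general
    (he : ∀ j α, DifferentiableAt ℝ (fun y => e y j α) x)
    (hf : ∀ᶠ y in nhds x, IsDualFrame (e y) (f y)) :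
    Asub e x = (((3 * charge e x / 4) * starTax e f x : ℝ) : ℂ)
      • (1 : Matrix (Fin 2) (Fin 2) ℂ) := by
  have htorsion : leviCivitaSum (connectionCoeff e f x) = -leviCivitaSum (coframeDeriv e f x) :=
    leviCivitaSum_eq_neg_of_torsionFree (connectionCoeff_torsionFree he hf)
  rw [Asub_eq_leviCivitaSum_connectionCoeff he hf, htorsion]
  congr 2
  linear_combination (-3 / 4) * charge_mul_starTax hf.self_of_nhds

end Dirac

/-- Lemma 6.1: the subprincipal symbol of the massless Dirac operator on
half-densities equals (3c/4)(*T^ax)·I. -/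
theorem subprincipal_symbol_of_massless_dirac
    (U : Set (Fin 3 → ℝ)) (hU : IsOpen U)
    (e : (Fin 3 → ℝ) → Fin 3 → Fin 3 → ℝ)
    (he : ∀ j α, ContDiffOn ℝ 1 (fun x => e x j α) U)
    (hli : ∀ x ∈ U, LinearIndependent ℝ (e x))
    (f : (Fin 3 → ℝ) → Fin 3 → Fin 3 → ℝ)
    (hf : ∀ x ∈ U, ∀ j k, ∑ α, e x j α * f x k α = if j = k then (1 : ℝ) else 0) :
    ∀ x ∈ U,
      Asub e x = (((3 * charge e x / 4) * starTax e f x : ℝ) : ℂ)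
        • (1 : Matrix (Fin 2) (Fin 2) ℂ) := fun _ hx =>
  have hUx := hU.mem_nhds hx
  subprincipal_symbol_of_massless_dirac_general
    (fun j α => ((he j α).contDiffAt hUx).differentiableAt one_ne_zero)
    (Filter.eventually_of_mem hUx hf)

end
end

section
/- Let e₁, e₂, e₃ ∈ ℝ³ and ẽ₁, ẽ₂, ẽ₃ ∈ ℝ³ be two linearly independent triples, σ^α := Σ_j e_j^α s^j, σ̃^α := Σ_j ẽ_j^α s^j, g^{αβ} := Σ_j e_j^α e_j^β, g̃^{αβ} := Σ_j ẽ_j^α ẽ_j^β. If ξ, ξ̃ ∈ ℝ³ satisfy Σ_α ξ̃_α σ̃^α = Σ_α ξ_α σ^α, then Σ_{α,β} g̃^{αβ} ξ̃_α ξ̃_β = Σ_{α,β} g^{αβ} ξ_α ξ_β. -/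
/-!
The metric is encoded in the principal symbol: since `det (∑ j, v j • pauli j) = -∑ j, v j ^ 2`,
the squared norm of a covector is minus the determinant of its symbol. Covectors with equal symbols
therefore have equal norms.
-/

open Complex Matrix BigOperators

noncomputable section

section

variable {ι κ R M : Type*} [Fintype ι] [Fintype κ]

lemma sum_smul_sum_smul_eq_sum_sum_mul_smul [Semiring R] [AddCommMonoid M] [Module R M]
    (c : ι → R) (a : κ → ι → R) (b : κ → M) :
    ∑ i, c i • ∑ k, a k i • b k = ∑ k, (∑ i, c i * a k i) • b k := by
  simp only [Finset.smul_sum, Finset.sum_smul, smul_smul]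
  exact Finset.sum_comm

lemma sum_sq_sum_mul_eq_sum_sum_gram_mul_mul [CommSemiring R] (a : κ → ι → R) (c : ι → R) :
    ∑ k, (∑ i, c i * a k i) ^ 2 = ∑ i, ∑ i', (∑ k, a k i * a k i') * c i * c i' :=
  calc ∑ k, (∑ i, c i * a k i) ^ 2
    _ = ∑ k, ∑ i, ∑ i', a k i * a k i' * c i * c i' := by
      simp only [sq, Finset.sum_mul_sum, mul_comm, mul_left_comm]
    _ = ∑ i, ∑ i', ∑ k, a k i * a k i' * c i * c i' := by
      rw [Finset.sum_comm]
      exact Finset.sum_congr rfl fun _ _ => Finset.sum_comm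
    _ = ∑ i, ∑ i', (∑ k, a k i * a k i') * c i * c i' := by
      simp only [Finset.sum_mul]

lemma det_sum_smul_pauli (v : Fin 3 → ℂ) : (∑ j, v j • pauli j).det = -∑ j, v j ^ 2 := by
  have entries : ∑ j, v j • pauli j = !![v 2, v 0 - v 1 * I; v 0 + v 1 * I, -v 2] := by
    ext a b
    fin_cases a <;> fin_cases b <;> simp [Fin.sum_univ_three, pauli, sub_eq_add_neg]
  rw [entries, det_fin_two_of, Fin.sum_univ_three]
  linear_combination v 1 ^ 2 * I_sq

/-- The principal symbol `∑ α, ξ α • σ α` at the covector `ξ`, where `σ α = ∑ j, e j α • s j` are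
the Pauli matrices of the frame `e`. The frame and the covector may be complex, and the coordinates
are indexed by an arbitrary finite type. -/
def principalSymbol (e : Fin 3 → ι → ℂ) (ξ : ι → ℂ) : Matrix (Fin 2) (Fin 2) ℂ :=
  ∑ α, ξ α • ∑ j, e j α • pauli j

lemma det_principalSymbol (e : Fin 3 → ι → ℂ) (ξ : ι → ℂ) :
    (principalSymbol e ξ).det = -∑ α, ∑ β, (∑ j, e j α * e j β) * ξ α * ξ β := by
  rw [principalSymbol, sum_smul_sum_smul_eq_sum_sum_mul_smul, det_sum_smul_pauli,
    sum_sq_sum_mul_eq_sum_sum_gram_mul_mul]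

theorem teleparallel_transport_isometric_general {e : Fin 3 → ι → ℂ} {et : Fin 3 → κ → ℂ}
    {ξ : ι → ℂ} {ξt : κ → ℂ} (h : principalSymbol et ξt = principalSymbol e ξ) :
    ∑ α, ∑ β, (∑ j, et j α * et j β) * ξt α * ξt β
      = ∑ α, ∑ β, (∑ j, e j α * e j β) * ξ α * ξ β := by
  rw [← neg_inj, ← det_principalSymbol, ← det_principalSymbol, h]

end

/-- the parallel transport defined by equating values of the principal symbol
preserves the Riemannian norm of covectors (metric compatibility of the teleparallel
connection). -/
theorem teleparallel_transport_isometric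
    (e et : Fin 3 → Fin 3 → ℝ)
    (he : LinearIndependent ℝ e) (het : LinearIndependent ℝ et)
    (ξ ξt : Fin 3 → ℝ)
    (h : ∑ α, (ξt α : ℂ) • (∑ j, (et j α : ℂ) • pauli j)
        = ∑ α, (ξ α : ℂ) • (∑ j, (e j α : ℂ) • pauli j)) :
    ∑ α, ∑ β, (∑ j, et j α * et j β) * ξt α * ξt β
      = ∑ α, ∑ β, (∑ j, e j α * e j β) * ξ α * ξ β := by
  exact_mod_cast teleparallel_transport_isometric_general h

end
end

section
/- Let e₁, e₂, e₃ ∈ ℝ³ be linearly independent, σ^α := Σ_{j=1}^{3} e_j^α s^j, g^{αβ} := Σ_{j=1}^{3} e_j^α e_j^β, and let g_{αβ} denote the inverse matrix of g^{αβ}. Then the quantity c := −(i/2) √(det g_{αβ}) · tr(σ¹ σ² σ³) is real and equals the sign of the determinant of the 3×3 real matrix E whose j-th row is e_j; in particular c ∈ {−1, +1}. -/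
open Complex Matrix BigOperators

noncomputable section

/-!
The Pauli matrices multiply by `(u·s)(v·s) = (u·v) 1 + i (u × v)·s`, and each of them is traceless.
Hence `tr((u·s)(v·s)(w·s))` is `2i` times the triple product of `u, v, w`. For the columns of the
matrix `E` with rows `e₁, e₂, e₃` this is `2i det E`. Since the contravariant metric
is `Eᵀ E`, its inverse has determinant `(det E)⁻²`, and the charge collapses to `det E / |det E|`.
-/

/-- The contraction `v·s = v₁ s¹ + v₂ s² + v₃ s³` of a complex vector with the Pauli matrices. -/
def pauliVec (v : Fin 3 → ℂ) : Matrix (Fin 2) (Fin 2) ℂ :=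
  ∑ j, v j • pauli j

lemma pauliVec_eq (v : Fin 3 → ℂ) :
    pauliVec v = !![v 2, v 0 - v 1 * I; v 0 + v 1 * I, -v 2] := by
  ext i j
  fin_cases i <;> fin_cases j <;> simp [pauliVec, pauli, Fin.sum_univ_three, sub_eq_add_neg]

lemma trace_pauliVec (v : Fin 3 → ℂ) : (pauliVec v).trace = 0 := by
  simp [pauliVec_eq, trace_fin_two]

lemma pauliVec_mul_pauliVec (u v : Fin 3 → ℂ) :
    pauliVec u * pauliVec v = (u ⬝ᵥ v) • 1 + I • pauliVec (u ⨯₃ v) := by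
  rw [pauliVec_eq u, pauliVec_eq v, pauliVec_eq, cross_apply, vec3_dotProduct, mul_fin_two,
    one_fin_two]
  ext i j
  fin_cases i <;> fin_cases j <;>
    simp only [Matrix.add_apply, Matrix.smul_apply, smul_eq_mul, of_apply, cons_val,
      Fin.zero_eta, Fin.mk_one] <;>
    grind [I_mul_I]

lemma trace_pauliVec_mul_pauliVec (u v : Fin 3 → ℂ) :
    (pauliVec u * pauliVec v).trace = 2 * (u ⬝ᵥ v) := by
  simp [pauliVec_mul_pauliVec, trace_pauliVec, mul_comm]

lemma trace_pauliVec_mul_pauliVec_mul_pauliVec (u v w : Fin 3 → ℂ) :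
    (pauliVec u * pauliVec v * pauliVec w).trace = 2 * I * (u ⬝ᵥ v ⨯₃ w) := by
  rw [mul_assoc, pauliVec_mul_pauliVec v w]
  simp only [mul_add, mul_smul_comm, mul_one, trace_add, trace_smul, trace_pauliVec,
    trace_pauliVec_mul_pauliVec, smul_eq_mul]
  ring

lemma trace_pauliVec_cols_eq_det (E : Matrix (Fin 3) (Fin 3) ℂ) :
    (pauliVec (E.col 0) * pauliVec (E.col 1) * pauliVec (E.col 2)).trace = 2 * I * E.det := by
  have cols_eq : (![E.col 0, E.col 1, E.col 2] : Matrix (Fin 3) (Fin 3) ℂ) = Eᵀ := by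
    ext i j
    fin_cases i <;> rfl
  rw [trace_pauliVec_mul_pauliVec_mul_pauliVec, triple_product_eq_det, cols_eq, det_transpose]

lemma sqrt_det_inv_transpose_mul_self {n : Type*} [Fintype n] [DecidableEq n]
    (M : Matrix n n ℝ) : √((Mᵀ * M)⁻¹.det) = |M.det|⁻¹ := by
  rw [det_nonsing_inv, det_mul, det_transpose, Ring.inverse_eq_inv', Real.sqrt_inv,
    Real.sqrt_mul_self_eq_abs]

lemma inv_abs_mul_self_eq_sign (r : ℝ) : |r|⁻¹ * r = Real.sign r := by
  obtain hneg | rfl | hpos := lt_trichotomy r 0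
  · rw [abs_of_neg hneg, Real.sign_of_neg hneg, inv_neg, neg_mul, inv_mul_cancel₀ hneg.ne]
  · simp
  · rw [abs_of_pos hpos, Real.sign_of_pos hpos, inv_mul_cancel₀ hpos.ne']

/-- The topological charge `c = -(i/2) √(det g_{αβ}) tr(σ¹ σ² σ³)` of the frame whose `j`-th vector
is the `j`-th row of `E`. The metric `g_{αβ}` is the inverse of `Eᵀ * E`, and `σ^α` is the
contraction of the `α`-th column of `E` with the Pauli matrices. A singular `E` gets charge `0`,
because the Lean inverse of a singular matrix is `0`. -/
def topologicalCharge (E : Matrix (Fin 3) (Fin 3) ℝ) : ℂ :=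
  -(I / 2) * (√((Eᵀ * E)⁻¹.det) : ℝ) *
    (pauliVec ((E.map ofReal).col 0) * pauliVec ((E.map ofReal).col 1) *
      pauliVec ((E.map ofReal).col 2)).trace

lemma topologicalCharge_eq_sign_det (E : Matrix (Fin 3) (Fin 3) ℝ) :
    topologicalCharge E = (Real.sign E.det : ℝ) := by
  have det_ofReal : (E.map ofReal).det = (E.det : ℂ) := (ofRealHom.map_det E).symm
  calc topologicalCharge E
      = -(I / 2) * (|E.det|⁻¹ : ℝ) * (2 * I * E.det) := by
        rw [topologicalCharge, sqrt_det_inv_transpose_mul_self, trace_pauliVec_cols_eq_det,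
          det_ofReal]
    _ = -(I * I) * ((|E.det|⁻¹ : ℝ) * E.det) := by ring
    _ = (|E.det|⁻¹ * E.det : ℝ) := by rw [I_mul_I, neg_neg, one_mul, ofReal_mul]
    _ = (Real.sign E.det : ℝ) := by rw [inv_abs_mul_self_eq_sign]

lemma topologicalCharge_eq_one_or_neg_one {E : Matrix (Fin 3) (Fin 3) ℝ}
    (hE : LinearIndependent ℝ E.row) : topologicalCharge E = 1 ∨ topologicalCharge E = -1 := by
  have det_ne_zero : E.det ≠ 0 :=
    ((isUnit_iff_isUnit_det E).mp (linearIndependent_rows_iff_isUnit.mp hE)).ne_zero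
  rw [topologicalCharge_eq_sign_det]
  obtain hneg | hpos := Real.sign_apply_eq_of_ne_zero _ det_ne_zero
  · exact .inr (by simp [hneg])
  · exact .inl (by simp [hpos])

/-- the topological charge c = −(i/2)√(det g_{αβ}) tr(σ¹σ²σ³) is real and
equals sgn det(e_j^α); in particular c = ±1. -/
theorem topological_charge_eq_sign_det
    (e : Fin 3 → Fin 3 → ℝ) (he : LinearIndependent ℝ e) :
    -(Complex.I / 2)
        * ((Real.sqrt ((Matrix.of fun α β => ∑ j, e j α * e j β : Matrix (Fin 3) (Fin 3) ℝ)⁻¹.det) : ℝ) : ℂ)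
        * ((∑ j, (e j 0 : ℂ) • pauli j) * (∑ j, (e j 1 : ℂ) • pauli j)
            * (∑ j, (e j 2 : ℂ) • pauli j)).trace
      = ((Real.sign (Matrix.of e : Matrix (Fin 3) (Fin 3) ℝ).det : ℝ) : ℂ)
    ∧ (-(Complex.I / 2)
        * ((Real.sqrt ((Matrix.of fun α β => ∑ j, e j α * e j β : Matrix (Fin 3) (Fin 3) ℝ)⁻¹.det) : ℝ) : ℂ)
        * ((∑ j, (e j 0 : ℂ) • pauli j) * (∑ j, (e j 1 : ℂ) • pauli j)
            * (∑ j, (e j 2 : ℂ) • pauli j)).trace = 1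
      ∨ -(Complex.I / 2)
        * ((Real.sqrt ((Matrix.of fun α β => ∑ j, e j α * e j β : Matrix (Fin 3) (Fin 3) ℝ)⁻¹.det) : ℝ) : ℂ)
        * ((∑ j, (e j 0 : ℂ) • pauli j) * (∑ j, (e j 1 : ℂ) • pauli j)
            * (∑ j, (e j 2 : ℂ) • pauli j)).trace = -1) := by
  change topologicalCharge (of e) = (Real.sign (of e).det : ℝ) ∧
    (topologicalCharge (of e) = 1 ∨ topologicalCharge (of e) = -1)
  exact ⟨topologicalCharge_eq_sign_det (of e), topologicalCharge_eq_one_or_neg_one he⟩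

end
end

section
/- Let V ⊆ ℝ³ × ℝ³ be open (coordinates (x, ξ)) and let v : V → ℂ² be continuously differentiable with ‖v(x,ξ)‖ = 1 for all (x,ξ) ∈ V. Set P(x,ξ) := v(x,ξ) v(x,ξ)^* (a 2×2 matrix). Then the generalized Poisson bracket {v^*, P, v} vanishes identically: Σ_{α=1}^{3} [ (∂v/∂x^α)^* P (∂v/∂ξ_α) − (∂v/∂ξ_α)^* P (∂v/∂x^α) ] = 0 on V. -/
open Complex BigOperators

noncomputable section

/-!
Since `P = v v^*`, each term factors as `a^* P b = (a^* v) (v^* b)`. Differentiating the constant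
`v^* v` gives `a^* v = -v^* a` for every directional derivative `a` of `v`, so
`a^* P b = -(v^* a) (v^* b)` is symmetric in `a` and `b`, and the bracket cancels term by term.
-/

open Matrix Topology

section Algebra

variable {m n R : Type*} [Fintype m] [Fintype n]

theorem dotProduct_vecMulVec_mulVec [NonUnitalSemiring R] (a v : m → R) (w b : n → R) :
    a ⬝ᵥ vecMulVec v w *ᵥ b = (a ⬝ᵥ v) * (w ⬝ᵥ b) := by
  rw [dotProduct_mulVec, vecMul_vecMulVec, smul_dotProduct, smul_eq_mul]

theorem star_dotProduct_vecMulVec_star_mulVec_comm [NonUnitalCommRing R] [StarRing R]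
    {a b v : n → R} (ha : star a ⬝ᵥ v = -(star v ⬝ᵥ a)) (hb : star b ⬝ᵥ v = -(star v ⬝ᵥ b)) :
    star a ⬝ᵥ vecMulVec v (star v) *ᵥ b = star b ⬝ᵥ vecMulVec v (star v) *ᵥ a := by
  rw [dotProduct_vecMulVec_mulVec, dotProduct_vecMulVec_mulVec, ha, hb, neg_mul, neg_mul, mul_comm]

end Algebra

section Calculus

variable {𝕜 E A ι : Type*} [NontriviallyNormedField 𝕜] [NormedAddCommGroup E] [NormedSpace 𝕜 E]
  [NormedRing A] [NormedAlgebra 𝕜 A] [Fintype ι] {u v : E → ι → A} {p : E}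

theorem fderiv_dotProduct_apply (hu : DifferentiableAt 𝕜 u p) (hv : DifferentiableAt 𝕜 v p)
    (w : E) :
    fderiv 𝕜 (fun q => u q ⬝ᵥ v q) p w = fderiv 𝕜 u p w ⬝ᵥ v p + u p ⬝ᵥ fderiv 𝕜 v p w := by
  have hu_coord := differentiableAt_pi.1 hu
  have hv_coord := differentiableAt_pi.1 hv
  simp only [dotProduct]
  rw [fderiv_fun_sum fun i _ => (hu_coord i).fun_mul (hv_coord i)]
  simp [fderiv_fun_mul' (hu_coord _) (hv_coord _), fderiv_apply hu, fderiv_apply hv,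
    Finset.sum_add_distrib, add_comm]

variable [StarRing 𝕜] [TrivialStar 𝕜] [StarRing A] [ContinuousStar A] [StarModule 𝕜 A]

theorem star_fderiv_dotProduct_eq_neg (hv : DifferentiableAt 𝕜 v p) {c : A}
    (hc : (fun q => star (v q) ⬝ᵥ v q) =ᶠ[𝓝 p] fun _ => c) (w : E) :
    star (fderiv 𝕜 v p w) ⬝ᵥ v p = -(star (v p) ⬝ᵥ fderiv 𝕜 v p w) := by
  have hderiv_zero : fderiv 𝕜 (fun q => star (v q) ⬝ᵥ v q) p w = 0 := by
    simp [hc.fderiv_eq]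
  rw [fderiv_dotProduct_apply hv.star hv, fderiv_star] at hderiv_zero
  exact eq_neg_of_add_eq_zero_left hderiv_zero

end Calculus

section PoissonBracket

variable {𝕜 E A ι κ m n : Type*} [NontriviallyNormedField 𝕜] [NormedAddCommGroup E]
  [NormedSpace 𝕜 E] [Fintype ι] [Fintype κ] [Fintype m] [Fintype n]

variable (𝕜) in
/-- The generalized Poisson bracket `{w^*, M, u}` at `p`, which is scalar because `w` and `u` are
columns. The vectors `e α` and `f α` are the directions of the coordinates `x^α` and `ξ_α`; the
adjoint is taken after differentiation, `(w^*)_{x^α}` being written `(w_{x^α})^*`. -/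
def generalizedPoissonBracket [NormedRing A] [NormedAlgebra 𝕜 A] [StarRing A] (e f : κ → E)
    (w : E → m → A) (M : E → Matrix m n A) (u : E → n → A) (p : E) : A :=
  ∑ α, (star (fderiv 𝕜 w p (e α)) ⬝ᵥ M p *ᵥ fderiv 𝕜 u p (f α)
    - star (fderiv 𝕜 w p (f α)) ⬝ᵥ M p *ᵥ fderiv 𝕜 u p (e α))

theorem generalized_poisson_bracket_projection_vanishes_general
    [StarRing 𝕜] [TrivialStar 𝕜] [NormedCommRing A] [NormedAlgebra 𝕜 A] [StarRing A]
    [ContinuousStar A] [StarModule 𝕜 A] (e f : κ → E) {v : E → ι → A} {p : E}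
    (hv : DifferentiableAt 𝕜 v p) {c : A}
    (hc : (fun q => star (v q) ⬝ᵥ v q) =ᶠ[𝓝 p] fun _ => c) :
    generalizedPoissonBracket 𝕜 e f v (fun q => vecMulVec (v q) (star (v q))) v p = 0 :=
  Finset.sum_eq_zero fun α _ => sub_eq_zero.2 <| star_dotProduct_vecMulVec_star_mulVec_comm
    (star_fderiv_dotProduct_eq_neg hv hc (e α)) (star_fderiv_dotProduct_eq_neg hv hc (f α))

end PoissonBracket

theorem star_dotProduct_self_eq_sum_normSq {ι : Type*} [Fintype ι] (z : ι → ℂ) :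
    star z ⬝ᵥ z = ((∑ i, normSq (z i) : ℝ) : ℂ) := by
  simp [dotProduct, normSq_eq_conj_mul_self]

/-- for a C¹ unit-norm field v(x,ξ) ∈ ℂ² and P = v v^*, the generalized
Poisson bracket {v^*, P, v} = Σ_α [v_{x^α}^* P v_{ξ_α} − v_{ξ_α}^* P v_{x^α}] vanishes. -/
theorem generalized_poisson_bracket_projection_vanishes
    (V : Set ((Fin 3 → ℝ) × (Fin 3 → ℝ))) (hV : IsOpen V)
    (v : ((Fin 3 → ℝ) × (Fin 3 → ℝ)) → Fin 2 → ℂ)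
    (hv : ∀ i, ContDiffOn ℝ 1 (fun p => v p i) V)
    (hnorm : ∀ p ∈ V, ∑ i, Complex.normSq (v p i) = 1) :
    ∀ p ∈ V,
      ∑ α : Fin 3,
        ((∑ i, ∑ j, (starRingEnd ℂ) (fderiv ℝ (fun q => v q i) p (Pi.single α 1, 0))
              * (v p i * (starRingEnd ℂ) (v p j))
              * fderiv ℝ (fun q => v q j) p (0, Pi.single α 1))
          - (∑ i, ∑ j, (starRingEnd ℂ) (fderiv ℝ (fun q => v q i) p (0, Pi.single α 1))
              * (v p i * (starRingEnd ℂ) (v p j))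
              * fderiv ℝ (fun q => v q j) p (Pi.single α 1, 0))) = 0 := by
  intro p hp
  have hV_nhds : V ∈ 𝓝 p := hV.mem_nhds hp
  have hdiff : DifferentiableAt ℝ v p := differentiableAt_pi.2 fun i =>
    ((hv i).contDiffAt hV_nhds).differentiableAt one_ne_zero
  have hnorm_const : (fun q => star (v q) ⬝ᵥ v q) =ᶠ[𝓝 p] fun _ => 1 := by
    filter_upwards [hV_nhds] with q hq
    rw [star_dotProduct_self_eq_sum_normSq, hnorm q hq, ofReal_one]
  simpa [generalizedPoissonBracket, dotProduct, mulVec, vecMulVec_apply, fderiv_apply hdiff,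
    mul_add, mul_assoc] using
    generalized_poisson_bracket_projection_vanishes_general
      (fun α : Fin 3 => ((Pi.single α 1, 0) : (Fin 3 → ℝ) × (Fin 3 → ℝ)))
      (fun α => (0, Pi.single α 1)) hdiff hnorm_const

end
end
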